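/- Let E = (C, V) be an election with |V| = n voters, and let A, B be disjoint sets of candidates, each of size m·n, disjoint from C. Then for each candidate c_i ∈ C there exists a single-crossing election on candidate set A ∪ B ∪ {c_i} with voter list V' = (v'_1, ..., v'_n) such that pos_{v'_j}(c_i) = m·n + pos_{v_j}(c_i) for each j ∈ [n], and moreover prepending the vote a_1 ≻ ⋯ ≻ a_{mn} ≻ c_i ≻ b_1 ≻ ⋯ ≻ b_{mn} and appending the vote b_1 ≻ ⋯ ≻ b_{mn} ≻ c_i ≻ a_1 ≻ ⋯ ≻ a_{mn} preserves the single-crossing property. -/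

import Mathlib

/-!
Each voter's order arises from `a_1 ≻ ⋯ ≻ a_N ≻ c ≻ b_1 ≻ ⋯ ≻ b_N` by exchanging the block of the
`x` candidates just before `c` with the block of the `y` candidates just after it. The pairs this
inverts are those that straddle `c` inside the window of `x` places before and `y` places after it,
so if `x` and `y` grow along the list of voters, a pair once inverted stays inverted and the profile
is single-crossing. The candidate `c` itself moves `y - x` places back, and `x = m * j`,
`y = m * j + d j` for the `j`-th voter (counted from `0`) realise any displacements
`0 ≤ d j ≤ m` with `x` and `y` monotone.
-/

/-- A profile of rankings, `rank v c` being the place voter `v` gives to candidate `c`, is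
single-crossing if, whenever the first voter ranks `a` before `b`, the voters who do so form a
prefix of the list of voters. -/
def IsSingleCrossing {n : ℕ} {C α : Type*} [LT α] (rank : Fin (n + 1) → C → α) : Prop :=
  ∀ a b, rank 0 a < rank 0 b → ∃ t : ℕ, ∀ v, rank v a < rank v b ↔ (v : ℕ) < t

theorem exists_iff_val_lt_of_antitone {n : ℕ} {p : Fin n → Prop} (hp : Antitone p) :
    ∃ t : ℕ, ∀ v, p v ↔ (v : ℕ) < t := by
  obtain h | ⟨u, h⟩ := (isLowerSet_setOfPred.mpr hp).eq_univ_or_Iio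
  · exact ⟨n, fun v => iff_of_true (Set.eq_univ_iff_forall.mp h v) v.isLt⟩
  · exact ⟨u, fun v => Set.ext_iff.mp h v⟩

section BlockSwap

/-- The place of `k` after the block of the `x` numbers just before `c` and the block of the `y`
numbers just after `c` have been exchanged, each keeping its internal order; it is meant for
`x ≤ c`. -/
def blockSwap (c x y k : ℕ) : ℕ :=
  if k + x < c then k
  else if k < c then k + (y + 1)
  else if k = c then c - x + y
  else if k ≤ c + y then k - (x + 1)
  else k

variable {c x y : ℕ}

@[simp]
theorem blockSwap_zero_zero (c k : ℕ) : blockSwap c 0 0 k = k := by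
  unfold blockSwap
  split_ifs <;> omega

theorem blockSwap_self (c x y : ℕ) : blockSwap c x y c = c - x + y := by
  unfold blockSwap
  split_ifs <;> omega

theorem blockSwap_full {k : ℕ} (hk : k ≤ 2 * c) :
    blockSwap c c c k = if k < c then k + (c + 1) else if k = c then c else k - (c + 1) := by
  unfold blockSwap
  split_ifs <;> omega

theorem blockSwap_lt {k K : ℕ} (hy : c + y < K) (hk : k < K) : blockSwap c x y k < K := by
  unfold blockSwap
  split_ifs <;> omega

theorem blockSwap_blockSwap (hx : x ≤ c) (k : ℕ) :
    blockSwap (c - x + y) y x (blockSwap c x y k) = k := by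
  unfold blockSwap
  split_ifs <;> omega

theorem blockSwap_lt_blockSwap_iff (hx : x ≤ c) (k l : ℕ) :
    blockSwap c x y k < blockSwap c x y l ↔
      k < l ∧ ¬(c ≤ k + x ∧ k ≤ c ∧ c ≤ l ∧ l ≤ c + y) ∨
        l < k ∧ (c ≤ l + x ∧ l ≤ c ∧ c ≤ k ∧ k ≤ c + y) := by
  unfold blockSwap
  split_ifs <;> omega

theorem isSingleCrossing_blockSwap {n : ℕ} {x y : Fin (n + 1) → ℕ} (hx : Monotone x)
    (hy : Monotone y) (hxc : ∀ v, x v ≤ c) :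
    IsSingleCrossing fun v => blockSwap c (x v) (y v) := by
  intro a b h₀
  refine exists_iff_val_lt_of_antitone fun v w hvw hw => ?_
  simp only [blockSwap_lt_blockSwap_iff (hxc _)] at h₀ hw ⊢
  have := hx hvw
  have := hy hvw
  have := hx (Fin.zero_le v)
  have := hy (Fin.zero_le v)
  omega

/-- `blockSwap` as a permutation of `Fin K`; exchanging the two blocks back inverts it. -/
@[simps]
def blockSwapPerm {K : ℕ} (c x y : ℕ) (hx : x ≤ c) (hy : c + y < K) : Equiv.Perm (Fin K) where
  toFun k := ⟨blockSwap c x y k, blockSwap_lt hy k.isLt⟩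
  invFun k := ⟨blockSwap (c - x + y) y x k, blockSwap_lt (by omega) k.isLt⟩
  left_inv k := Fin.ext (blockSwap_blockSwap hx k)
  right_inv k := Fin.ext <| by
    have h := blockSwap_blockSwap (c := c - x + y) (x := y) (y := x) (by omega) k
    rwa [Nat.add_sub_cancel, Nat.sub_add_cancel hx] at h

end BlockSwap

section Pad

variable {n : ℕ} {α : Type*}

/-- The sequence `a, f 0, …, f (n - 1), b`: data of the `n` original voters, extended to the
prepended and the appended voter. -/
def pad (a : α) (f : Fin n → α) (b : α) : Fin (n + 2) → α :=
  Fin.cons a (Fin.snoc f b : Fin (n + 1) → α)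

variable (a : α) (f : Fin n → α) (b : α)

@[simp]
theorem pad_zero : pad a f b 0 = a := rfl

@[simp]
theorem pad_succ_castSucc (j : Fin n) : pad a f b j.castSucc.succ = f j := by
  simp [pad]

@[simp]
theorem pad_last : pad a f b (Fin.last (n + 1)) = b := by
  simp [pad, ← Fin.succ_last]

variable {a f b}

theorem pad_le [Preorder α] (hab : a ≤ b) (hfb : ∀ j, f j ≤ b) (v : Fin (n + 2)) :
    pad a f b v ≤ b := by
  cases v using Fin.cases with
  | zero => simpa
  | succ v => cases v using Fin.lastCases <;> simp [hfb]

theorem le_pad [Preorder α] (hab : a ≤ b) (haf : ∀ j, a ≤ f j) (v : Fin (n + 2)) :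
    a ≤ pad a f b v := by
  cases v using Fin.cases with
  | zero => rfl
  | succ v => cases v using Fin.lastCases <;> simp [hab, haf]

theorem monotone_pad [Preorder α] (hf : Monotone f) (hab : a ≤ b) (haf : ∀ j, a ≤ f j)
    (hfb : ∀ j, f j ≤ b) : Monotone (pad a f b) := by
  intro v w hvw
  cases v using Fin.cases with
  | zero => exact le_pad hab haf w
  | succ v =>
    cases w using Fin.cases with
    | zero => simp at hvw
    | succ w =>
      cases w using Fin.lastCases with
      | last => simpa using pad_le hab hfb v.succ
      | cast j =>
        cases v using Fin.lastCases with
        | last => simp at hvw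
        | cast i => simpa using hf (by simpa using hvw)

end Pad

theorem mul_add_le_mul_of_lt {m i k d : ℕ} (hd : d ≤ m) (hik : i < k) : m * i + d ≤ m * k :=
  (Nat.add_le_add_left hd _).trans (Nat.mul_le_mul_left m hik)

theorem monotone_mul_val_add {m n : ℕ} {d : Fin n → ℕ} (hd : ∀ j, d j ≤ m) :
    Monotone fun j : Fin n => m * j + d j := by
  intro i j hij
  obtain rfl | hlt := hij.eq_or_lt
  · rfl
  · exact (mul_add_le_mul_of_lt (hd i) hlt).trans (Nat.le_add_right _ _)

theorem adj_construction_general {m n N : ℕ} (hN : m * n ≤ N) {d : Fin n → ℕ}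
    (hd : ∀ j, d j ≤ m) :
    ∃ prefs' : Fin (n + 2) → Equiv.Perm (Fin (2 * N + 1)),
      IsSingleCrossing (fun v => prefs' v) ∧
      (∀ j : Fin n, (prefs' j.castSucc.succ ⟨N, by omega⟩ : ℕ) + 1 = N + (d j + 1)) ∧
      prefs' 0 = Equiv.refl _ ∧
      ∀ k : Fin (2 * N + 1), (prefs' (Fin.last (n + 1)) k : ℕ) + 1 =
        if (k : ℕ) < N then N + 2 + k else if (k : ℕ) = N then N + 1 else k - N := by
  have hx : ∀ j : Fin n, m * (j : ℕ) ≤ N := fun j => (Nat.mul_le_mul_left m j.isLt.le).trans hN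
  have hy : ∀ j : Fin n, m * (j : ℕ) + d j ≤ N := fun j =>
    (mul_add_le_mul_of_lt (hd j) j.isLt).trans hN
  let x : Fin (n + 2) → ℕ := pad 0 (fun j => m * j) N
  let y : Fin (n + 2) → ℕ := pad 0 (fun j => m * j + d j) N
  have hx_mono : Monotone x :=
    monotone_pad (Fin.val_strictMono.monotone.const_mul' m) N.zero_le (fun _ => Nat.zero_le _) hx
  have hy_mono : Monotone y :=
    monotone_pad (monotone_mul_val_add hd) N.zero_le (fun _ => Nat.zero_le _) hy
  have hxN : ∀ v, x v ≤ N := pad_le N.zero_le hx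
  have hyN : ∀ v, y v ≤ N := pad_le N.zero_le hy
  refine ⟨fun v => blockSwapPerm N (x v) (y v) (hxN v) (by have := hyN v; omega),
    fun a b => isSingleCrossing_blockSwap hx_mono hy_mono hxN a b, fun j => ?_, ?_, fun k => ?_⟩
  · have := hx j
    simp only [blockSwapPerm_apply_val, blockSwap_self, x, y, pad_succ_castSucc]
    omega
  · ext k
    simp [x, y]
  · simp only [blockSwapPerm_apply_val, x, y, pad_last]
    rw [blockSwap_full (by omega)]
    split_ifs <;> omega

/-- the `Adj` construction. Given an election on candidates `Fin m`
with `n` voters (voter `v` ranks candidate `c` in 1-based position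
`(prefs v c : ℕ) + 1`) and disjoint sets `A = {a_1, …, a_{mn}}`,
`B = {b_1, …, b_{mn}}` of fresh candidates, for each candidate `ci` there is a
single-crossing election on `A ∪ B ∪ {ci}` — encoded as `Fin (2*(m*n)+1)` with
index `k < m*n` standing for `a_{k+1}`, index `m*n` for `ci`, and index
`m*n + 1 + k` for `b_{k+1}` — with `n + 2` voters `v'_0, v'_1, …, v'_n, v'_{n+1}`
such that: the `n` middle voters rank `ci` in position `m*n + pos_{v_j}(ci)`, the
prepended voter `v'_0` has order `a_1 ≻ ⋯ ≻ a_{mn} ≻ ci ≻ b_1 ≻ ⋯ ≻ b_{mn}`, the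
appended voter `v'_{n+1}` has order `b_1 ≻ ⋯ ≻ b_{mn} ≻ ci ≻ a_1 ≻ ⋯ ≻ a_{mn}`,
and the whole `(n+2)`-voter profile is single-crossing. -/
theorem adj_construction {m n : ℕ} (hm : 0 < m) (hn : 0 < n)
    (prefs : Fin n → (Fin m ≃ Fin m)) (ci : Fin m) :
    ∃ prefs' : Fin (n + 2) → (Fin (2 * (m * n) + 1) ≃ Fin (2 * (m * n) + 1)),
      -- the whole (n+2)-voter profile is single-crossing
      (∀ a b : Fin (2 * (m * n) + 1),
        (prefs' ⟨0, by omega⟩ a : ℕ) < prefs' ⟨0, by omega⟩ b →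
        ∃ t : ℕ, ∀ v : Fin (n + 2),
          ((prefs' v a : ℕ) < prefs' v b ↔ (v : ℕ) < t)) ∧
      -- the position of ci for each middle voter v'_{j+1} is m*n + pos_{v_j}(ci)
      (∀ j : Fin n,
        (prefs' ⟨(j : ℕ) + 1, by omega⟩ ⟨m * n, by omega⟩ : ℕ) + 1 =
          m * n + ((prefs j ci : ℕ) + 1)) ∧
      -- the prepended voter v'_0 : a_1 ≻ ⋯ ≻ a_{mn} ≻ ci ≻ b_1 ≻ ⋯ ≻ b_{mn}
      (prefs' ⟨0, by omega⟩ = Equiv.refl (Fin (2 * (m * n) + 1))) ∧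
      -- the appended voter v'_{n+1} : b_1 ≻ ⋯ ≻ b_{mn} ≻ ci ≻ a_1 ≻ ⋯ ≻ a_{mn}
      (∀ cand : Fin (2 * (m * n) + 1),
        (prefs' ⟨n + 1, by omega⟩ cand : ℕ) + 1 =
          if (cand : ℕ) < m * n then m * n + 2 + (cand : ℕ)
          else if (cand : ℕ) = m * n then m * n + 1
          else (cand : ℕ) - m * n) :=
  adj_construction_general le_rfl fun j => (prefs j ci).isLt.le
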